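/- Let q ≥ 3 be an integer and let a be an integer coprime to q. Let c > 0 and X ≥ 14735 be real numbers such that c·φ(q) < 1 and such that |π(x;q,a) − Li(x)/φ(q)| < c·x/(log x)² holds for all real x ≥ X. Then for every integer n ≥ 1, either p_n(q,a) ≤ X or n·φ(q)·log(n·φ(q)) < p_n(q,a) < n·φ(q)·( log(n·φ(q)) + (4/3)·log log(n·φ(q)) ). -/

import Mathlib

/-- `π(x;q,a) = #{p ≤ x : p prime, p ≡ a (mod q)}`. -/
noncomputable def primesPi (x : ℝ) (q : ℕ) (a : ℤ) : ℕ :=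
  ((Finset.Icc 1 ⌊x⌋₊).filter (fun p : ℕ => p.Prime ∧ (p : ZMod q) = (a : ZMod q))).card

/-- `Li(x) = ∫₂ˣ dt / log t`, the logarithmic integral. -/
noncomputable def Li (x : ℝ) : ℝ := ∫ t in (2 : ℝ)..x, 1 / Real.log t

/-- `p_n(q,a)`, the `n`-th smallest prime congruent to `a` modulo `q` (for `n ≥ 1`). -/
noncomputable def nthPrimeMod (q : ℕ) (a : ℤ) (n : ℕ) : ℕ :=
  Nat.nth (fun p : ℕ => p.Prime ∧ (p : ZMod q) = (a : ZMod q)) (n - 1)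

/-!
Put `N = n φ(q)`. At `x = p_n(q,a)` the counting function equals `n`, so the hypothesis says
`|N - Li x| < x / L²` with `L = log x`. Since `Li x` lies between `x/L + x/L²` and
`x/L + x/L² + 4x/L³`, this gives `x/L < N < (x/L)(1 + u)` with `u = 2/L + 4/L²`.

From `N > x/L` we get `log N ≥ L - log L`, and `log log N ≥ (3/4) log L` makes up for the missing
`log L`. From `N < (x/L)(1 + u)` we get `log N ≤ L - log L + u ≤ L - 2` as soon as
`log L ≥ 2 + u`, which holds for `x ≥ 14735`, while `(1 + u)(L - 2) = L - 8/L² < L`.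
-/

open Real Set

lemma hasDerivAt_Li {t : ℝ} (ht : 1 < t) : HasDerivAt Li (1 / log t) t := by
  have hcont : ContinuousOn (fun s : ℝ => 1 / log s) (Ioi 1) := fun s (hs : 1 < s) =>
    (continuousAt_const.div (continuousAt_log (by linarith))
      (log_pos hs).ne').continuousWithinAt
  have hsub : uIcc 2 t ⊆ Ioi 1 := ordConnected_Ioi.uIcc_subset (mem_Ioi.2 one_lt_two) ht
  exact intervalIntegral.integral_hasDerivAt_right (hcont.mono hsub).intervalIntegrable
    (hcont.stronglyMeasurableAtFilter isOpen_Ioi t ht) (hcont.continuousAt (Ioi_mem_nhds ht))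

lemma Li_two : Li 2 = 0 := intervalIntegral.integral_same

lemma hasDerivAt_div_log_pow {t : ℝ} (ht : 1 < t) (k : ℕ) :
    HasDerivAt (fun s : ℝ => s / log s ^ k) (1 / log t ^ k - k / log t ^ (k + 1)) t := by
  have hl : 0 < log t := log_pos ht
  have ht0 : t ≠ 0 := by linarith
  refine ((hasDerivAt_id' t).fun_div ((hasDerivAt_log ht0).fun_pow k)
    (pow_pos hl k).ne').congr_deriv ?_
  rcases k with _ | k
  · simp
  · simp only [Nat.add_sub_cancel]
    field_simp
    ring

/-- The asymptotic expansion `x / log x + x / log² x + 2 x / log³ x + ⋯` of `Li x`, cut off after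
its third term, with the coefficient `2` of that term replaced by a parameter `C`. Comparing `C`
with `2` decides on which side of `Li` the expansion eventually lies. -/
noncomputable def liExpansion (C x : ℝ) : ℝ :=
  x / log x + x / log x ^ 2 + C * (x / log x ^ 3)

lemma hasDerivAt_Li_sub_liExpansion (C : ℝ) {t : ℝ} (ht : 1 < t) :
    HasDerivAt (fun s => Li s - liExpansion C s) (((2 - C) * log t + 3 * C) / log t ^ 4) t := by
  have hl : log t ≠ 0 := (log_pos ht).ne'
  have h₁ : HasDerivAt (fun s => s / log s) (1 / log t - 1 / log t ^ 2) t := by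
    simpa using hasDerivAt_div_log_pow ht 1
  refine ((hasDerivAt_Li ht).fun_sub ((h₁.fun_add (hasDerivAt_div_log_pow ht 2)).fun_add
    ((hasDerivAt_div_log_pow ht 3).const_mul C))).congr_deriv ?_
  push_cast
  field_simp
  ring

lemma monotoneOn_Li_sub_liExpansion {C : ℝ} (hC0 : 0 ≤ C) (hC2 : C ≤ 2) :
    MonotoneOn (fun s => Li s - liExpansion C s) (Ioi 1) := by
  have hderiv (t : ℝ) (ht : t ∈ Ioi 1) := hasDerivAt_Li_sub_liExpansion C ht
  refine monotoneOn_of_hasDerivWithinAt_nonneg (convex_Ioi 1)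
    (fun t ht => (hderiv t ht).continuousAt.continuousWithinAt)
    (fun t ht => (hderiv t (interior_subset ht)).hasDerivWithinAt) fun t ht => ?_
  have hl : 0 < log t := log_pos (interior_subset ht)
  have : 0 ≤ 2 - C := sub_nonneg.2 hC2
  positivity

lemma antitoneOn_Li_sub_liExpansion {C : ℝ} (hC : 2 < C) :
    AntitoneOn (fun s => Li s - liExpansion C s) (Ici (exp (3 * C / (C - 2)))) := by
  have hC' : 0 < C - 2 := sub_pos.2 hC
  have hone {t : ℝ} (ht : exp (3 * C / (C - 2)) ≤ t) : 1 < t :=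
    (one_lt_exp_iff.2 (by positivity)).trans_le ht
  have hderiv (t : ℝ) (ht : t ∈ Ici (exp (3 * C / (C - 2)))) :=
    hasDerivAt_Li_sub_liExpansion C (hone ht)
  refine antitoneOn_of_hasDerivWithinAt_nonpos (convex_Ici _)
    (fun t ht => (hderiv t ht).continuousAt.continuousWithinAt)
    (fun t ht => (hderiv t (interior_subset ht)).hasDerivWithinAt) fun t ht => ?_
  have ht' : exp (3 * C / (C - 2)) ≤ t := interior_subset ht
  have hlog : 3 * C / (C - 2) ≤ log t := (le_log_iff_exp_le (by linarith [hone ht'])).2 ht'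
  rw [div_le_iff₀ hC'] at hlog
  exact div_nonpos_of_nonpos_of_nonneg (by linarith) (by positivity)

lemma liExpansion_zero_le_Li {x : ℝ} (hx : 8192 ≤ x) : liExpansion 0 x ≤ Li x := by
  -- The case `C = 2` on `[2, 8192]` supplies the starting value at `8192` for the case `C = 0`.
  have hfrom_two : Li 2 - liExpansion 2 2 ≤ Li 8192 - liExpansion 2 8192 :=
    monotoneOn_Li_sub_liExpansion (by norm_num) le_rfl
      (by norm_num) (by norm_num) (by norm_num)
  have hfrom_8192 : Li 8192 - liExpansion 0 8192 ≤ Li x - liExpansion 0 x :=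
    monotoneOn_Li_sub_liExpansion le_rfl (by norm_num)
      (by norm_num) (mem_Ioi.2 (by linarith)) hx
  have hstart : liExpansion 2 2 ≤ liExpansion 2 8192 - liExpansion 0 8192 := by
    have hlog : log 8192 = 13 * log 2 := by
      rw [show (8192 : ℝ) = 2 ^ 13 by norm_num, log_pow]
      norm_num
    have hlo := log_two_gt_d9
    have hhi := log_two_lt_d9
    simp only [liExpansion, hlog]
    field_simp
    nlinarith
  linarith [Li_two]

/-- Integration by parts turns `∫ 1 / log` into `∫ 1 / log²`; the last term bounds the latter by
replacing `s ↦ 1 / s` with its chord between `s = log A` and `s = log B`. -/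
lemma Li_sub_Li_le {A B : ℝ} (hA : 1 < A) (hAB : A ≤ B) :
    Li B - Li A ≤ B / log B - A / log A + (B - A) / (log A * log B) := by
  have ha : 0 < log A := log_pos hA
  have hb : 0 < log B := log_pos (hA.trans_le hAB)
  have hderiv (t : ℝ) (ht : t ∈ Icc A B) : HasDerivAt
      (fun s => Li s - (s * (log A + log B + 1) - s * log s) / (log A * log B))
      (1 / log t - (log A + log B - log t) / (log A * log B)) t := by
    have ht1 : 1 < t := hA.trans_le ht.1
    refine ((hasDerivAt_Li ht1).fun_sub ((((hasDerivAt_id' t).mul_const _).fun_sub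
      (hasDerivAt_mul_log (by linarith))).div_const _)).congr_deriv ?_
    ring
  have hanti := antitoneOn_of_hasDerivWithinAt_nonpos (convex_Icc A B)
    (fun t ht => (hderiv t ht).continuousAt.continuousWithinAt)
    (fun t ht => (hderiv t (interior_subset ht)).hasDerivWithinAt) fun t ht => by
      obtain ⟨hAt, htB⟩ : t ∈ Icc A B := interior_subset ht
      have h₁ : log A ≤ log t := log_le_log (by linarith) hAt
      have h₂ : log t ≤ log B := log_le_log (by linarith) htB
      rw [sub_nonpos, div_le_div_iff₀ (by linarith) (by positivity)]
      linarith [mul_nonneg (sub_nonneg.2 h₁) (sub_nonneg.2 h₂)]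
  have hle := hanti (left_mem_Icc.2 hAB) (right_mem_Icc.2 hAB) hAB
  calc Li B - Li A
      ≤ (B * (log A + log B + 1) - B * log B) / (log A * log B)
        - (A * (log A + log B + 1) - A * log A) / (log A * log B) := by linarith
    _ = B / log B - A / log A + (B - A) / (log A * log B) := by
      field_simp
      ring

lemma Li_two_pow_le {n : ℕ} (hn : 1 ≤ n) :
    Li (2 ^ n) ≤ 2 ^ n / (n * log 2) - 2 / log 2
      + (∑ k ∈ Finset.Ico 1 n, (2 : ℝ) ^ k / (k * (k + 1))) / log 2 ^ 2 := by
  induction n, hn using Nat.le_induction with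
  | base => simp [Li_two]
  | succ n hn ih =>
    have hstep : Li (2 ^ (n + 1)) - Li (2 ^ n) ≤ 2 ^ (n + 1) / ((n + 1) * log 2)
        - 2 ^ n / (n * log 2) + 2 ^ n / (n * (n + 1)) / log 2 ^ 2 := by
      convert Li_sub_Li_le (one_lt_pow₀ one_lt_two (by omega))
        (pow_le_pow_right₀ (one_le_two (α := ℝ)) (Nat.le_add_right n 1)) using 2
      · rw [log_pow, log_pow]
        push_cast
        ring
      · rw [log_pow, log_pow, div_div]
        push_cast
        ring
    rw [Finset.sum_Ico_succ_top hn, add_div]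
    push_cast
    linarith

lemma Li_le_liExpansion_four {x : ℝ} (hx : 512 ≤ x) : Li x ≤ liExpansion 4 x := by
  have hlo := log_two_gt_d9
  have hhi := log_two_lt_d9
  have hlog : log 512 = 9 * log 2 := by
    rw [show (512 : ℝ) = 2 ^ 9 by norm_num, log_pow]
    norm_num
  have hexp : exp (3 * 4 / (4 - 2)) ≤ 512 := by
    rw [← le_log_iff_exp_le (by norm_num), hlog]
    linarith
  have hstart : Li 512 ≤ liExpansion 4 512 := by
    have hsum : ∑ k ∈ Finset.Ico (1 : ℕ) 9, (2 : ℝ) ^ k / (k * (k + 1)) = 3643/315 := by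
      norm_num [Finset.sum_Ico_succ_top]
    calc Li 512 = Li (2 ^ 9) := by norm_num
      _ ≤ 2 ^ 9 / (9 * log 2) - 2 / log 2 + 3643/315 / log 2 ^ 2 := by
        simpa only [hsum, Nat.cast_ofNat] using Li_two_pow_le (show 1 ≤ 9 by norm_num)
      _ ≤ liExpansion 4 512 := by
        simp only [liExpansion, hlog]
        field_simp
        nlinarith
  have hmono : Li x - liExpansion 4 x ≤ Li 512 - liExpansion 4 512 :=
    antitoneOn_Li_sub_liExpansion (by norm_num) hexp (hexp.trans hx) hx
  linarith

lemma le_log_of_14735_le {x : ℝ} (hx : 14735 ≤ x) : 9.58 ≤ log x := by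
  have hfactor : log 14580 = 2 * log 2 + 6 * log 3 + log 5 := by
    rw [show (14580 : ℝ) = 2 ^ 2 * 3 ^ 6 * 5 by norm_num, log_mul (by norm_num) (by norm_num),
      log_mul (by norm_num) (by norm_num), log_pow, log_pow]
    norm_num
  have hle : log 14580 ≤ log x := log_le_log (by norm_num) (by linarith)
  linarith [log_two_gt_d9, log_three_gt_d9, log_five_gt_d9]

lemma log_le_div_four {L : ℝ} (hL : 9 ≤ L) : log L ≤ L / 4 := by
  have hlog : log 9 = 2 * log 3 := by
    rw [show (9 : ℝ) = 3 ^ 2 by norm_num, log_pow]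
    norm_num
  have hanti : log L / L ≤ log 9 / 9 :=
    log_div_self_antitoneOn (mem_Ici.2 (by linarith [exp_one_lt_three]))
      (mem_Ici.2 (by linarith [exp_one_lt_three])) hL
  calc log L ≤ log 9 / 9 * L := (div_le_iff₀ (by linarith)).1 hanti
    _ ≤ 1 / 4 * L := mul_le_mul_of_nonneg_right (by linarith [log_three_lt_d9]) (by linarith)
    _ = L / 4 := one_div_mul_eq_div 4 L

lemma two_add_two_div_add_four_div_sq_le_log {L : ℝ} (hL : 9.58 ≤ L) :
    2 + (2 / L + 4 / L ^ 2) ≤ log L := by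
  have hL0 : 0 < L := by linarith
  have hlog : log 9.6 = 4 * log 2 + log 3 - log 5 := by
    rw [show (9.6 : ℝ) = 2 ^ 4 * 3 / 5 by norm_num, log_div (by norm_num) (by norm_num),
      log_mul (by norm_num) (by norm_num), log_pow]
    norm_num
  have htangent : log 9.6 + (1 - 9.6 / L) ≤ log L := by
    have h := one_sub_inv_le_log_of_pos (show 0 < L / 9.6 by positivity)
    rw [inv_div, log_div hL0.ne' (by norm_num)] at h
    linarith
  have hinv : 1 / L ≤ 1 / 9.58 := by gcongr
  have hinv_sq : (1 / L) ^ 2 ≤ (1 / 9.58) ^ 2 := by gcongr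
  have hlower : 2.2617 ≤ log 9.6 := by
    linarith [log_two_gt_d9, log_three_gt_d9, log_five_lt_d9]
  calc 2 + (2 / L + 4 / L ^ 2) = 3 + 11.6 * (1 / L) + 4 * (1 / L) ^ 2 - 1 - 9.6 / L := by ring
    _ ≤ log 9.6 + (1 - 9.6 / L) := by
      linarith
    _ ≤ log L := htangent

lemma mul_log_lt_of_lt_div_log_mul {x N : ℝ} (hx : 1 < x) (hN0 : 0 < N)
    (hL : 2 + (2 / log x + 4 / log x ^ 2) ≤ log (log x))
    (hN : N < x / log x * (1 + (2 / log x + 4 / log x ^ 2))) : N * log N < x := by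
  have hL0 : 0 < log x := log_pos hx
  have hu0 : 0 < 2 / log x + 4 / log x ^ 2 := by positivity
  have hfactor : (1 + (2 / log x + 4 / log x ^ 2)) * (log x - 2) = log x - 8 / log x ^ 2 := by
    field_simp
    ring
  set L := log x
  set u := 2 / L + 4 / L ^ 2
  have hlogN : log N ≤ L - 2 := by
    calc log N ≤ log (x / L * (1 + u)) := log_le_log hN0 hN.le
      _ = L - log L + log (1 + u) := by
        rw [log_mul (by positivity) (by positivity), log_div (by positivity) hL0.ne']
      _ ≤ L - 2 := by linarith [log_le_sub_one_of_pos (show 0 < 1 + u by positivity)]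
  have hL2 : 0 < L - 2 := by linarith [log_le_sub_one_of_pos hL0]
  calc N * log N ≤ N * (L - 2) := by gcongr
    _ < x / L * (1 + u) * (L - 2) := by gcongr
    _ = x / L * (L - 8 / L ^ 2) := by rw [mul_assoc, hfactor]
    _ ≤ x / L * L := by
      gcongr
      exact sub_le_self _ (by positivity)
    _ = x := div_mul_cancel₀ x hL0.ne'

lemma lt_mul_log_add_of_div_log_lt {x N : ℝ} (hx : 0 < x) (hL : 9 ≤ log x)
    (hN : x / log x < N) : x < N * (log N + 4 / 3 * log (log N)) := by
  have hL0 : 0 < log x := by linarith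
  have hxL : 0 < x / log x := by positivity
  have hlogN : log x - log (log x) ≤ log N := by
    rw [← log_div hx.ne' hL0.ne']
    exact log_le_log hxL hN.le
  have hloglog : 3 * log (log x) ≤ 4 * log (log N) := by
    have hpow : log x ^ 3 ≤ log N ^ 4 := by
      calc log x ^ 3 ≤ (3 / 4 * log x) ^ 4 := by nlinarith [pow_pos hL0 3]
        _ ≤ log N ^ 4 := by
          gcongr
          linarith [log_le_div_four hL]
    have h := log_le_log (by positivity) hpow
    rw [log_pow, log_pow] at h
    exact_mod_cast h
  calc x = x / log x * log x := (div_mul_cancel₀ x hL0.ne').symm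
    _ < N * log x := by gcongr
    _ ≤ N * (log N + 4 / 3 * log (log N)) := by
      have : 0 < N := hxL.trans hN
      gcongr
      linarith

theorem mul_log_bounds_of_abs_sub_Li_lt {x N : ℝ} (hx : 14735 ≤ x) (hN0 : 0 < N)
    (hN : |N - Li x| < x / log x ^ 2) :
    N * log N < x ∧ x < N * (log N + 4 / 3 * log (log N)) := by
  have hL := le_log_of_14735_le hx
  have : 0 < log x := by linarith
  obtain ⟨hlower, hupper⟩ := abs_lt.1 hN
  have hLi_lower := liExpansion_zero_le_Li (show 8192 ≤ x by linarith)
  have hLi_upper := Li_le_liExpansion_four (show 512 ≤ x by linarith)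
  unfold liExpansion at hLi_lower hLi_upper
  refine ⟨mul_log_lt_of_lt_div_log_mul (by linarith) hN0
    (two_add_two_div_add_four_div_sq_le_log hL) ?_,
    lt_mul_log_add_of_div_log_lt (by linarith) (by linarith) (by linarith)⟩
  calc N < x / log x + x / log x ^ 2 + 4 * (x / log x ^ 3) + x / log x ^ 2 := by linarith
    _ = x / log x * (1 + (2 / log x + 4 / log x ^ 2)) := by
      field_simp
      ring

lemma primesPi_nthPrimeMod {q : ℕ} [NeZero q] {a : ℤ} (ha : IsUnit (a : ZMod q)) {n : ℕ}
    (hn : 1 ≤ n) : primesPi (nthPrimeMod q a n) q a = n := by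
  have hcount : Nat.count (fun p : ℕ => p.Prime ∧ (p : ZMod q) = (a : ZMod q))
      (nthPrimeMod q a n + 1) = n - 1 + 1 :=
    Nat.count_nth_succ_of_infinite (Nat.infinite_setOfPred_prime_and_eq_mod ha) (n - 1)
  rw [Nat.count_eq_card_filter_range, Nat.sub_add_cancel hn] at hcount
  rw [primesPi, Nat.floor_natCast]
  refine Eq.trans (congrArg Finset.card ?_) hcount
  ext p
  simp only [Finset.mem_filter, Finset.mem_Icc, Finset.mem_range, Nat.lt_succ_iff]
  exact ⟨fun hp => ⟨hp.1.2, hp.2⟩, fun hp => ⟨⟨hp.2.1.one_le, hp.1⟩, hp.2⟩⟩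

lemma abs_mul_sub_lt_of_abs_sub_div_lt {m l φ c y : ℝ} (hφ : 0 < φ) (hy : 0 ≤ y)
    (hc : c * φ ≤ 1) (h : |m - l / φ| < c * y) : |m * φ - l| < y := by
  calc |m * φ - l| = |m - l / φ| * φ := by
        rw [← abs_of_pos hφ, ← abs_mul, abs_of_pos hφ, sub_mul, div_mul_cancel₀ l hφ.ne']
    _ < c * y * φ := by gcongr
    _ = c * φ * y := by ring
    _ ≤ y := mul_le_of_le_one_left hy hc

theorem nth_prime_bounds_general {q : ℕ} (hq : q ≠ 0) {a : ℤ} (ha : Int.gcd a q = 1)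
    {c X : ℝ} (hX : 14735 ≤ X)
    (hcphi : c * (Nat.totient q : ℝ) ≤ 1)
    (hbound : ∀ x : ℝ, X ≤ x →
      |(primesPi x q a : ℝ) - Li x / (Nat.totient q : ℝ)| < c * x / Real.log x ^ 2)
    {n : ℕ} (hn : 1 ≤ n) :
    (nthPrimeMod q a n : ℝ) ≤ X ∨
      ((n : ℝ) * (Nat.totient q : ℝ) * Real.log ((n : ℝ) * (Nat.totient q : ℝ)) <
          (nthPrimeMod q a n : ℝ) ∧
        (nthPrimeMod q a n : ℝ) <
          (n : ℝ) * (Nat.totient q : ℝ) *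
            (Real.log ((n : ℝ) * (Nat.totient q : ℝ)) +
              4 / 3 * Real.log (Real.log ((n : ℝ) * (Nat.totient q : ℝ))))) := by
  have : NeZero q := ⟨hq⟩
  have hunit : IsUnit (a : ZMod q) := by
    rwa [ZMod.coe_int_isUnit_iff_isCoprime, isCoprime_comm, Int.isCoprime_iff_gcd_eq_one]
  have hφ : (0 : ℝ) < Nat.totient q := by exact_mod_cast Nat.totient_pos.2 hq.pos
  refine or_iff_not_imp_left.2 fun hlt => ?_
  have hXp : X ≤ nthPrimeMod q a n := (not_le.1 hlt).le
  have hcount := hbound _ hXp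
  rw [primesPi_nthPrimeMod hunit hn, mul_div_assoc] at hcount
  exact mul_log_bounds_of_abs_sub_Li_lt (hX.trans hXp) (mul_pos (Nat.cast_pos.2 hn) hφ)
    (abs_mul_sub_lt_of_abs_sub_div_lt hφ (by positivity) hcphi hcount)

theorem nth_prime_bounds (q : ℕ) (hq : 3 ≤ q) (a : ℤ) (ha : Int.gcd a q = 1)
    (c X : ℝ) (hc : 0 < c) (hX : 14735 ≤ X)
    (hcphi : c * (Nat.totient q : ℝ) < 1)
    (hbound : ∀ x : ℝ, X ≤ x →
      |(primesPi x q a : ℝ) - Li x / (Nat.totient q : ℝ)| < c * x / Real.log x ^ 2)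
    (n : ℕ) (hn : 1 ≤ n) :
    (nthPrimeMod q a n : ℝ) ≤ X ∨
      ((n : ℝ) * (Nat.totient q : ℝ) * Real.log ((n : ℝ) * (Nat.totient q : ℝ)) <
          (nthPrimeMod q a n : ℝ) ∧
        (nthPrimeMod q a n : ℝ) <
          (n : ℝ) * (Nat.totient q : ℝ) *
            (Real.log ((n : ℝ) * (Nat.totient q : ℝ)) +
              4 / 3 * Real.log (Real.log ((n : ℝ) * (Nat.totient q : ℝ))))) :=
  nth_prime_bounds_general (by omega) ha hX hcphi.le hbound hn
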